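/- (Symmetrization of the rate function.) Let μ be a probability measure on Γ = {0,1}^𝔛, let x, y ∈ 𝔛 be distinct with σ_{x,y}(μ) and μ mutually absolutely continuous, φ := dσ_{x,y}(μ)/dμ, and let c : Γ → [0,∞) be measurable with c ∈ L¹(Γ,μ). Define c̃(γ) := (1/2)(c(γ) + c(σ_{x,y}(γ)) φ(γ)). Then: (i) the measure c̃·μ is invariant under σ_{x,y}; (ii) for all bounded measurable F, G : Γ → ℝ, ∫_Γ c̃(γ)(∇_{x,y}F)(γ)(∇_{x,y}G)(γ) μ(dγ) = ∫_Γ c(γ)(∇_{x,y}F)(γ)(∇_{x,y}G)(γ) μ(dγ). -/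

import Mathlib

/-!
Write `T` for the involution `swapT x y` and `m = c·μ`. Since `φ·μ = T(μ)`, the measure with
density `(c ∘ T) φ` with respect to `μ` is `(c ∘ T)·T(μ) = T(c·μ) = T(m)`, because `T` is an
involution. Hence `c̃·μ = (m + T(m)) / 2` (`withDensity_symm_eq`), the average of `m` over the
two-element group generated by `T`. Such an average is `T`-invariant, which is (i). For (ii),
`∇F` changes sign under `T`, so the product `∇F ∇G` is `T`-invariant and has the same integral
against `m` and `T(m)`, hence against their average.
-/

open MeasureTheory
open scoped ENNReal

/-- The action of the transposition `σ_{x,y}` on configurations `γ : 𝔛 → Bool`. -/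
def swapT {𝔛 : Type*} [DecidableEq 𝔛] (x y : 𝔛) (γ : 𝔛 → Bool) : 𝔛 → Bool :=
  fun t => γ (Equiv.swap x y t)

/-- The Radon–Nikodým derivative `φ(γ) = dσ_{x,y}(μ)/dμ (γ)`, as a real-valued function. -/
noncomputable def rnd {𝔛 : Type*} [DecidableEq 𝔛] (μ : Measure (𝔛 → Bool)) (x y : 𝔛)
    (γ : 𝔛 → Bool) : ℝ :=
  ((μ.map (swapT x y)).rnDeriv μ γ).toReal

/-- `(∇_{x,y}F)(γ) = F(σ_{x,y}(γ)) − F(γ)`. -/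
def nabla {𝔛 : Type*} [DecidableEq 𝔛] (x y : 𝔛) (F : (𝔛 → Bool) → ℝ) (γ : 𝔛 → Bool) : ℝ :=
  F (swapT x y γ) - F γ

theorem swapT_swapT {𝔛 : Type*} [DecidableEq 𝔛] (x y : 𝔛) (γ : 𝔛 → Bool) :
    swapT x y (swapT x y γ) = γ := by
  funext t
  simp [swapT]

theorem measurable_swapT {𝔛 : Type*} [DecidableEq 𝔛] (x y : 𝔛) :
    Measurable (swapT x y) :=
  measurable_pi_lambda _ fun _ => measurable_pi_apply _

theorem map_map_swapT {𝔛 : Type*} [DecidableEq 𝔛] (x y : 𝔛) (m : Measure (𝔛 → Bool)) :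
    (m.map (swapT x y)).map (swapT x y) = m := by
  rw [Measure.map_map (measurable_swapT x y) (measurable_swapT x y),
    funext (swapT_swapT x y) (f := swapT x y ∘ swapT x y) (g := id), Measure.map_id]

/-- Pushing `f·μ` forward by the involution `T = swapT x y` gives `(f ∘ T)·T(μ)`. -/
theorem map_withDensity_swapT {𝔛 : Type*} [DecidableEq 𝔛] (x y : 𝔛) (μ : Measure (𝔛 → Bool))
    {f : (𝔛 → Bool) → ℝ≥0∞} (hf : Measurable f) :
    (μ.withDensity f).map (swapT x y)
      = (μ.map (swapT x y)).withDensity (fun γ => f (swapT x y γ)) := by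
  have hT := measurable_swapT x y
  have hfT : Measurable fun γ => f (swapT x y γ) := hf.comp hT
  ext s hs
  rw [Measure.map_apply hT hs, withDensity_apply _ (hT hs), withDensity_apply _ hs,
    setLIntegral_map hs hfT hT]
  simp only [swapT_swapT]

theorem measurable_rnd {𝔛 : Type*} [DecidableEq 𝔛] (μ : Measure (𝔛 → Bool)) (x y : 𝔛) :
    Measurable (rnd μ x y) :=
  (Measure.measurable_rnDeriv _ _).ennreal_toReal

/-- The symmetrized measure `c̃·μ` is the average of `c·μ` and its image under `swapT x y`. -/
theorem withDensity_symm_eq {𝔛 : Type*} [DecidableEq 𝔛]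
    (μ : Measure (𝔛 → Bool)) [IsProbabilityMeasure μ] (x y : 𝔛)
    (hac : μ.map (swapT x y) ≪ μ)
    (c : (𝔛 → Bool) → ℝ) (hc : Measurable c) (hc0 : ∀ γ, 0 ≤ c γ) :
    μ.withDensity (fun γ => ENNReal.ofReal ((c γ + c (swapT x y γ) * rnd μ x y γ) / 2))
      = (2⁻¹ : ℝ≥0∞) • (μ.withDensity (fun γ => ENNReal.ofReal (c γ))
          + (μ.withDensity (fun γ => ENNReal.ofReal (c γ))).map (swapT x y)) := by
  have hT := measurable_swapT x y
  have : IsProbabilityMeasure (μ.map (swapT x y)) :=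
    Measure.isProbabilityMeasure_map hT.aemeasurable
  have hf : Measurable (fun γ => ENNReal.ofReal (c γ)) := hc.ennreal_ofReal
  have hfT : Measurable (fun γ => ENNReal.ofReal (c (swapT x y γ))) := hf.comp hT
  have hφ := Measure.measurable_rnDeriv (μ.map (swapT x y)) μ
  rw [map_withDensity_swapT x y μ hf]
  nth_rewrite 1 [← Measure.withDensity_rnDeriv_eq _ _ hac]
  rw [← withDensity_mul μ hφ hfT, ← withDensity_add_left hf,
    ← withDensity_smul' _ _ (by simp)]
  apply withDensity_congr_ae
  -- `rnd` applies `toReal` to `rnDeriv`, which loses nothing only where `rnDeriv` is finite.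
  filter_upwards [Measure.rnDeriv_lt_top (μ.map (swapT x y)) μ] with γ hγ
  have h0 : 0 ≤ rnd μ x y γ := ENNReal.toReal_nonneg
  simp only [Pi.smul_apply, Pi.add_apply, Pi.mul_apply, smul_eq_mul]
  rw [div_eq_inv_mul, ENNReal.ofReal_mul (by norm_num),
    ENNReal.ofReal_add (hc0 _) (mul_nonneg (hc0 _) h0), ENNReal.ofReal_mul (hc0 _),
    ENNReal.ofReal_inv_of_pos (by norm_num), rnd, ENNReal.ofReal_toReal hγ.ne,
    mul_comm (ENNReal.ofReal (c (swapT x y γ)))]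
  simp

/-- Symmetrization of the rate function: with
`c̃(γ) := (1/2)(c(γ) + c(σ_{x,y}(γ))φ(γ))`, (i) the measure `c̃·μ` is `σ_{x,y}`-invariant, and
(ii) `∫ c̃ (∇_{x,y}F)(∇_{x,y}G) dμ = ∫ c (∇_{x,y}F)(∇_{x,y}G) dμ` for all bounded measurable
`F, G`. -/
theorem symmetrization_of_rate
    {𝔛 : Type*} [Countable 𝔛] [DecidableEq 𝔛]
    (μ : Measure (𝔛 → Bool)) [IsProbabilityMeasure μ]
    (x y : 𝔛) (hxy : x ≠ y)
    (hac : μ.map (swapT x y) ≪ μ) (hac' : μ ≪ μ.map (swapT x y))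
    (c : (𝔛 → Bool) → ℝ) (hc : Measurable c) (hc0 : ∀ γ, 0 ≤ c γ)
    (hcint : Integrable c μ) :
    ((μ.withDensity (fun γ =>
          ENNReal.ofReal ((c γ + c (swapT x y γ) * rnd μ x y γ) / 2))).map (swapT x y)
        = μ.withDensity (fun γ =>
            ENNReal.ofReal ((c γ + c (swapT x y γ) * rnd μ x y γ) / 2)))
      ∧ (∀ F G : (𝔛 → Bool) → ℝ, Measurable F → Measurable G →
          (∃ M : ℝ, ∀ γ, |F γ| ≤ M) → (∃ M : ℝ, ∀ γ, |G γ| ≤ M) →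
          ∫ γ, ((c γ + c (swapT x y γ) * rnd μ x y γ) / 2)
              * nabla x y F γ * nabla x y G γ ∂μ
            = ∫ γ, c γ * nabla x y F γ * nabla x y G γ ∂μ) := by
  have hT := measurable_swapT x y
  have key := withDensity_symm_eq μ x y hac c hc hc0
  refine ⟨?_, ?_⟩
  · rw [key, Measure.map_smul, Measure.map_add _ _ hT, map_map_swapT, add_comm]
  · rintro F G hF hG ⟨M, hM⟩ ⟨N, hN⟩
    have hnF : Measurable (nabla x y F) := (hF.comp hT).sub hF
    have hnG : Measurable (nabla x y G) := (hG.comp hT).sub hG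
    set H : (𝔛 → Bool) → ℝ := fun γ => nabla x y F γ * nabla x y G γ with hH
    have hHm : Measurable H := hnF.mul hnG
    have hHT : ∀ γ, H (swapT x y γ) = H γ := by
      intro γ
      simp only [hH, nabla, swapT_swapT]
      ring
    have hHb : ∀ γ, ‖H γ‖ ≤ (M + M) * (N + N) := by
      intro γ
      rw [Real.norm_eq_abs, hH, abs_mul]
      have h1 : |nabla x y F γ| ≤ M + M := (abs_sub _ _).trans (add_le_add (hM _) (hM _))
      have h2 : |nabla x y G γ| ≤ N + N := (abs_sub _ _).trans (add_le_add (hN _) (hN _))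
      exact mul_le_mul h1 h2 (abs_nonneg _) ((abs_nonneg _).trans h1)
    have hct0 : ∀ γ, 0 ≤ (c γ + c (swapT x y γ) * rnd μ x y γ) / 2 := fun γ =>
      div_nonneg (add_nonneg (hc0 _) (mul_nonneg (hc0 _) ENNReal.toReal_nonneg)) (by norm_num)
    have hctm : Measurable fun γ => (c γ + c (swapT x y γ) * rnd μ x y γ) / 2 :=
      (hc.add ((hc.comp hT).mul (measurable_rnd μ x y))).div_const 2
    have hint : ∀ g : (𝔛 → Bool) → ℝ, Measurable g → (∀ γ, 0 ≤ g γ) →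
        ∫ γ, g γ * nabla x y F γ * nabla x y G γ ∂μ
          = ∫ γ, H γ ∂(μ.withDensity fun γ => ENNReal.ofReal (g γ)) := by
      intro g hg hg0
      rw [integral_withDensity_eq_integral_toReal_smul hg.ennreal_ofReal (by simp)]
      refine integral_congr_ae (.of_forall fun γ => ?_)
      simp only [ENNReal.toReal_ofReal (hg0 γ), smul_eq_mul, hH, mul_assoc]
    rw [hint _ hctm hct0, hint c hc hc0, key]
    set m := μ.withDensity fun γ => ENNReal.ofReal (c γ)
    have : IsFiniteMeasure m := isFiniteMeasure_withDensity_ofReal hcint.2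
    have hHi : ∀ (ν : Measure (𝔛 → Bool)) [IsFiniteMeasure ν], Integrable H ν := fun ν _ =>
      Integrable.of_bound hHm.aestronglyMeasurable _ (.of_forall hHb)
    rw [integral_smul_measure, integral_add_measure (hHi _) (hHi _),
      integral_map hT.aemeasurable hHm.aestronglyMeasurable]
    simp only [hHT, ENNReal.toReal_inv, ENNReal.toReal_ofNat, smul_eq_mul]
    ring
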